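/- arXiv:math/0112091 — 3 statements merged into one kernel-verified Lean document; each statement's English description precedes it below -/
import Mathlib

section
/- Let B be a unital C*-algebra with unit e, let A be a complex unital algebra, and let φ : A → B be an injective unital algebra homomorphism whose range φ(A) is symmetric in B (i.e., closed under the adjoint operation of B). Then A has property (P_A) with respect to φ if and only if A has property (~P_A) with respect to φ. -/
/-!
Under `(P_A)`, elements of `A` whose images in `B` are close to `1` are invertible. By translation,
invertibility in `A` is then locally constant along any family in `A` whose image is a continuous
family of units of `B`. Applied to `z ↦ z - a`, this shows that a connected unbounded subset of the
resolvent set of `φ a` is contained in the resolvent set of `a`, since `1 - z⁻¹ • a` is invertible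
for large `z`. If `φ a` is invertible and self-adjoint, its spectrum avoids the whole imaginary
axis, so `a` is invertible. The general case follows by applying this to `b * a` and `a * b`, where
`φ b = star (φ a)`.
-/

open Filter Topology Bornology

section Monoid

variable {A M F X : Type*} [Monoid A] [Monoid M]

lemma isUnit_of_isUnit_mul_of_isUnit_mul {a b c : M} (hba : IsUnit (b * a))
    (hac : IsUnit (a * c)) : IsUnit a := by
  obtain ⟨l, hl⟩ := hba.exists_left_inv
  obtain ⟨r, hr⟩ := hac.exists_right_inv
  exact isUnit_iff_exists_and_exists.2 ⟨⟨c * r, by rwa [← mul_assoc]⟩, l * b, by rwa [mul_assoc]⟩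

variable [FunLike F A M] [MonoidHomClass F A M] {φ : F}

lemma isUnit_of_isUnit_of_map_eq_inv_mul {x y : A} {p q : Mˣ} (hx : IsUnit x)
    (hp : φ x = p) (hq : φ y = q) (h : ∀ a, φ a = ↑(p⁻¹ * q) → IsUnit a) : IsUnit y := by
  obtain ⟨w, rfl⟩ := hx
  have hw : φ ↑w⁻¹ = ↑p⁻¹ :=
    Units.eq_inv_of_mul_eq_one_right (by rw [← hp, ← map_mul, Units.inv_mul, map_one])
  refine (Units.isUnit_units_mul w⁻¹ y).1 (h _ ?_)
  rw [map_mul, hw, hq, Units.val_mul]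

variable [TopologicalSpace M] [ContinuousMul M] [TopologicalSpace X]

lemma isLocallyConstant_isUnit_of_continuous_units
    (hφ : ∀ᶠ a in comap φ (𝓝 1), IsUnit a) {γ : X → A} {u : X → Mˣ} (hu : Continuous u)
    (hγ : ∀ t, φ (γ t) = u t) : IsLocallyConstant fun t ↦ IsUnit (γ t) := by
  rw [eventually_comap] at hφ
  refine (IsLocallyConstant.iff_eventually_eq _).2 fun s ↦ ?_
  have hst : Tendsto (fun t ↦ ((u s)⁻¹ * u t : Mˣ).val) (𝓝 s) (𝓝 1) :=
    (Units.continuous_val.comp (continuous_const.mul hu)).tendsto' s _ (by simp)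
  have hts : Tendsto (fun t ↦ ((u t)⁻¹ * u s : Mˣ).val) (𝓝 s) (𝓝 1) :=
    (Units.continuous_val.comp (hu.inv.mul continuous_const)).tendsto' s _ (by simp)
  filter_upwards [hst.eventually hφ, hts.eventually hφ] with t hst hts
  exact propext ⟨fun ht ↦ isUnit_of_isUnit_of_map_eq_inv_mul ht (hγ t) (hγ s) hts,
    fun hs ↦ isUnit_of_isUnit_of_map_eq_inv_mul hs (hγ s) (hγ t) hst⟩

end Monoid

section LocalSpectralInvariance

variable {𝕜 A B : Type*} [CommSemiring 𝕜] [Ring A] [Algebra 𝕜 A] [NormedRing B] [Algebra 𝕜 B]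

/-- Property `(P_A)`: elements of `φ(A)` of small norm become invertible in `B` after adding `1`,
with inverse in `𝕜 • 1 + φ(A)`. -/
def IsLocallySpectrallyInvariant (φ : A →ₐ[𝕜] B) : Prop :=
  ∃ ε > (0 : ℝ), ∀ x : A, ‖φ x‖ < ε →
    ∃ u : Bˣ, (u : B) = 1 + φ x ∧ ∃ (c : 𝕜) (y : A), ((u⁻¹ : Bˣ) : B) = c • (1 : B) + φ y

lemma IsLocallySpectrallyInvariant.eventually_isUnit {φ : A →ₐ[𝕜] B}
    (h : IsLocallySpectrallyInvariant φ) (hinj : Function.Injective φ) :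
    ∀ᶠ a in comap φ (𝓝 1), IsUnit a := by
  obtain ⟨ε, hε, h⟩ := h
  filter_upwards [preimage_mem_comap (Metric.ball_mem_nhds 1 hε)] with a ha
  obtain ⟨u, hu, c, y, hy⟩ := h (a - 1) (by simpa [dist_eq_norm] using ha)
  have hua : φ a = u := by simp [hu]
  have huy : φ (algebraMap 𝕜 A c + y) = ↑u⁻¹ := by simp [hy, Algebra.algebraMap_eq_smul_one]
  refine isUnit_iff_exists.2 ⟨algebraMap 𝕜 A c + y, hinj ?_, hinj ?_⟩
  · rw [map_mul, hua, huy, Units.mul_inv, map_one]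
  · rw [map_mul, hua, huy, Units.inv_mul, map_one]

lemma isLocallySpectrallyInvariant_of_isLocalHom [HasSummableGeomSeries B] (φ : A →ₐ[𝕜] B)
    [IsLocalHom φ] : IsLocallySpectrallyInvariant φ := by
  refine ⟨1, one_pos, fun x hx ↦ ?_⟩
  have hφx : IsUnit (φ (1 + x)) := by
    simpa using isUnit_one_sub_of_norm_lt_one (x := -φ x) (by simpa using hx)
  obtain ⟨w, hw⟩ := hφx.of_map
  refine ⟨Units.map (φ : A →* B) w, by simp [hw], 0, ↑w⁻¹, ?_⟩
  rw [zero_smul, zero_add]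
  rfl

end LocalSpectralInvariance

section Resolvent

variable {𝕜 A B : Type*} [NormedField 𝕜] [Ring A] [Algebra 𝕜 A] [NormedRing B]
  [NormedAlgebra 𝕜 B] {φ : A →ₐ[𝕜] B}

lemma eventually_cobounded_mem_resolventSet (hφ : ∀ᶠ a in comap φ (𝓝 1), IsUnit a) (a : A) :
    ∀ᶠ z in cobounded 𝕜, z ∈ resolventSet 𝕜 a := by
  have hlim : Tendsto (fun z : 𝕜 ↦ φ (1 - z⁻¹ • a)) (cobounded 𝕜) (𝓝 1) := by
    simpa using (tendsto_inv₀_cobounded (α := 𝕜)).smul_const (φ a) |>.const_sub 1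
  filter_upwards [(tendsto_comap_iff.2 hlim).eventually hφ, eventually_ne_cobounded 0]
    with z hz hz0
  have hfactor : algebraMap 𝕜 A z - a = algebraMap 𝕜 A z * (1 - z⁻¹ • a) := by
    rw [mul_sub, mul_one, ← Algebra.smul_def, smul_inv_smul₀ hz0]
  rw [spectrum.mem_resolventSet_iff, hfactor]
  exact ((IsUnit.mk0 z hz0).map _).mul hz

lemma subset_resolventSet_of_isPreconnected [HasSummableGeomSeries B]
    (hφ : ∀ᶠ a in comap φ (𝓝 1), IsUnit a) {a : A} {S : Set 𝕜} (hS : IsPreconnected S)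
    (hunbdd : ¬ IsBounded S) (hSφ : S ⊆ resolventSet 𝕜 (φ a)) : S ⊆ resolventSet 𝕜 a := by
  obtain ⟨w, hw, hwS⟩ : ∃ w ∈ resolventSet 𝕜 a, w ∈ S := by
    by_contra! hdisj
    exact hunbdd (isBounded_def.2 <|
      mem_of_superset (eventually_cobounded_mem_resolventSet hφ a) hdisj)
  choose u hu using fun z : S ↦ spectrum.mem_resolventSet_iff.1 (hSφ z.2)
  have hu_cont : Continuous u := by
    rw [Units.isOpenEmbedding_val.isInducing.continuous_iff,
      show Units.val ∘ u = fun z : S ↦ algebraMap 𝕜 B z - φ a from funext hu]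
    exact ((continuous_algebraMap 𝕜 B).comp continuous_subtype_val).sub continuous_const
  have hconst := isLocallyConstant_isUnit_of_continuous_units hφ hu_cont
    (γ := fun z : S ↦ algebraMap 𝕜 A z - a) (by simp [hu])
  have := isPreconnected_iff_preconnectedSpace.1 hS
  intro z hz
  exact (hconst.apply_eq_of_preconnectedSpace ⟨z, hz⟩ ⟨w, hwS⟩).mpr hw

end Resolvent

section RealSpectrum

lemma not_isBounded_setOf_re_eq_zero : ¬ IsBounded {z : ℂ | z.re = 0} := fun h ↦
  NormedSpace.unbounded_univ ℝ ℝ <|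
    (Complex.imCLM.lipschitz.isBounded_image h).subset
      fun t _ ↦ ⟨t * Complex.I, by simp, by simp⟩

variable {A B : Type*} [Ring A] [Algebra ℂ A] [NormedRing B] [NormedAlgebra ℂ B]
  [HasSummableGeomSeries B] {φ : A →ₐ[ℂ] B}

lemma isUnit_of_isUnit_map_of_spectrum_real (hφ : ∀ᶠ a in comap φ (𝓝 1), IsUnit a) {a : A}
    (hreal : ∀ z ∈ spectrum ℂ (φ a), z.im = 0) (ha : IsUnit (φ a)) : IsUnit a := by
  have haxis : {z : ℂ | z.re = 0} ⊆ resolventSet ℂ (φ a) := by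
    intro z hz
    by_contra hspec
    obtain rfl : z = 0 := Complex.ext hz (hreal z hspec)
    exact spectrum.zero_notMem ℂ ha hspec
  have hconn : IsPreconnected {z : ℂ | z.re = 0} :=
    ((convex_singleton 0).is_linear_preimage Complex.reLm.isLinear).isPreconnected
  have h0 : (0 : ℂ) ∈ resolventSet ℂ a :=
    subset_resolventSet_of_isPreconnected hφ hconn not_isBounded_setOf_re_eq_zero haxis rfl
  simpa using spectrum.mem_resolventSet_iff.1 h0

end RealSpectrum

/-- The hypothesis `hermitian` is the definition of a Hermitian Banach *-algebra. -/
theorem stmt_1_general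
    {B : Type*} [NormedRing B] [StarMul B] [NormedAlgebra ℂ B] [HasSummableGeomSeries B]
    {A : Type*} [Ring A] [Algebra ℂ A] {φ : A →ₐ[ℂ] B}
    (hermitian : ∀ b : B, IsSelfAdjoint b → ∀ z ∈ spectrum ℂ b, z.im = 0)
    (hinj : Function.Injective φ) (hsymm : ∀ a : A, ∃ b : A, φ b = star (φ a)) :
    IsLocallySpectrallyInvariant φ ↔ IsLocalHom φ := by
  refine ⟨fun h ↦ ⟨fun a ha ↦ ?_⟩, fun _ ↦ isLocallySpectrallyInvariant_of_isLocalHom φ⟩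
  have hself {x : A} (hx : IsSelfAdjoint (φ x)) : IsUnit (φ x) → IsUnit x :=
    isUnit_of_isUnit_map_of_spectrum_real (h.eventually_isUnit hinj) (hermitian _ hx)
  obtain ⟨b, hb⟩ := hsymm a
  have hba : IsUnit (b * a) := by
    apply hself <;> rw [map_mul, hb]
    exacts [.star_mul_self _, ha.star.mul ha]
  have hab : IsUnit (a * b) := by
    apply hself <;> rw [map_mul, hb]
    exacts [.mul_star_self _, ha.mul ha.star]
  exact isUnit_of_isUnit_mul_of_isUnit_mul hba hab

/-- Lemma `lemlocglob` (b): for an injective unital algebra morphism `φ : A → B` into a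
unital C*-algebra `B` whose range `φ(A)` is symmetric (closed under the adjoint), the local
spectral invariance property `(P_A)` holds if and only if the global property `(~P_A)`
(`φ⁻¹(B⁻¹) = A⁻¹`) holds. -/
theorem stmt_1
    (B : Type*) [NormedRing B] [StarRing B] [CStarRing B]
    [NormedAlgebra ℂ B] [StarModule ℂ B] [CompleteSpace B]
    (A : Type*) [Ring A] [Algebra ℂ A]
    (φ : A →ₐ[ℂ] B)
    (hinj : Function.Injective φ)
    (hsymm : ∀ a : A, ∃ b : A, φ b = star (φ a)) :
    (∃ ε > (0 : ℝ), ∀ x : A, ‖φ x‖ < ε →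
        ∃ u : Bˣ, (u : B) = 1 + φ x ∧
          ∃ (c : ℂ) (y : A), ((u⁻¹ : Bˣ) : B) = c • (1 : B) + φ y)
      ↔ (∀ a : A, IsUnit (φ a) ↔ IsUnit a) := by
  let : CStarAlgebra B := {}
  exact (stmt_1_general (fun _ hb _ ↦ hb.im_eq_zero_of_mem_spectrum) hinj hsymm).trans
    ⟨fun _ _ ↦ isUnit_map_iff φ _, fun h ↦ ⟨fun a ↦ (h a).1⟩⟩
end

section
/- Let B be a complex Banach algebra with unit e, let A ⊆ B be a unital subalgebra (e ∈ A) that is spectrally invariant in B, and let J ⊊ A be a proper semi-ideal of A. Let x ∈ J, λ ∈ ℂ, a = λe + x, and let μ ∈ ℂ be such that μe − a is invertible in B. Then μ ≠ λ, the resolvent satisfies the identity (μe − a)⁻¹ = (μ − λ)⁻¹ e + (μ − λ)⁻² x + (μ − λ)⁻² x (μe − a)⁻¹ x, and consequently (μe − a)⁻¹ − (μ − λ)⁻¹ e ∈ J, i.e., the resolvent of a lies in ℂ·e + J. -/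
/-! Writing `c = μ - λ` and `u = c • 1 - x`, expanding `x * u⁻¹ * x = (c - u) * u⁻¹ * (c - u)` gives
`c ^ 2 • u⁻¹ - 2c + u`, which is the resolvent identity up to division by `c ^ 2`. Division is
possible because `c = 0` would make `x = -u` a unit of `A`, and a semi-ideal containing one is
everything: `b = u * (u⁻¹ * b * u⁻¹) * u`. -/

section SemiIdeal

variable {R B : Type*} [CommSemiring R] [Semiring B] [Algebra R B]

/-- A subalgebra `A` of `B` is spectrally invariant if `A ∩ B⁻¹ = A⁻¹`; since `A⁻¹ ⊆ A ∩ B⁻¹`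
always holds, only closure under the inverses of `B` is recorded. -/
def IsSpectrallyInvariant (A : Subalgebra R B) : Prop :=
  ∀ u : Bˣ, (u : B) ∈ A → (↑u⁻¹ : B) ∈ A

/-- A semi-ideal of `A`, encoded as a submodule of the ambient algebra `B` contained in `A`:
it absorbs elements of `A` placed between two of its own elements. -/
structure IsSemiIdeal (A : Subalgebra R B) (J : Submodule R B) : Prop where
  le : J ≤ Subalgebra.toSubmodule A
  mul_mul_mem : ∀ {x b y : B}, x ∈ J → b ∈ A → y ∈ J → x * b * y ∈ J

theorem IsSemiIdeal.eq_toSubmodule_of_unit_mem {A : Subalgebra R B} {J : Submodule R B}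
    (hJ : IsSemiIdeal A J) {u : Bˣ} (hu : (u : B) ∈ J) (hu_inv : (↑u⁻¹ : B) ∈ A) :
    J = Subalgebra.toSubmodule A := by
  refine hJ.le.antisymm fun b hb ↦ ?_
  have hb_conj : ↑u * (↑u⁻¹ * b * ↑u⁻¹) * ↑u ∈ J :=
    hJ.mul_mul_mem hu (A.mul_mem (A.mul_mem hu_inv hb) hu_inv) hu
  simpa only [mul_assoc, Units.inv_mul, mul_one, Units.mul_inv_cancel_left] using hb_conj

end SemiIdeal

theorem sq_smul_inv_eq_of_eq_smul_one_sub {R B : Type*} [CommRing R] [Ring B] [Algebra R B]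
    {u : Bˣ} {c : R} {x : B} (hu : (u : B) = c • 1 - x) :
    c ^ 2 • (↑u⁻¹ : B) = c • 1 + x + x * ↑u⁻¹ * x := by
  obtain rfl : x = c • 1 - u := by rw [hu, sub_sub_cancel]
  have h_expand : (c • 1 - (u : B)) * ↑u⁻¹ * (c • 1 - ↑u) =
      c ^ 2 • ↑u⁻¹ - c • 1 - (c • 1 - ↑u) := by
    simp only [sub_mul, mul_sub, smul_mul_assoc, mul_smul_comm, one_mul, mul_one, Units.mul_inv,
      Units.inv_mul, smul_sub, smul_smul, pow_two]
  rw [h_expand]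
  abel

section Field

variable {K B : Type*} [Field K] [Ring B] [Algebra K B]

theorem inv_eq_of_eq_smul_one_sub {u : Bˣ} {c : K} {x : B} (hc : c ≠ 0)
    (hu : (u : B) = c • 1 - x) :
    (↑u⁻¹ : B) = c⁻¹ • 1 + (c ^ 2)⁻¹ • x + (c ^ 2)⁻¹ • (x * ↑u⁻¹ * x) := by
  have hc_inv : (c ^ 2)⁻¹ * c = c⁻¹ := by field_simp
  calc (↑u⁻¹ : B) = (c ^ 2)⁻¹ • (c ^ 2 • ↑u⁻¹) := (inv_smul_smul₀ (pow_ne_zero 2 hc) _).symm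
    _ = (c ^ 2)⁻¹ • (c • 1 + x + x * ↑u⁻¹ * x) := by rw [sq_smul_inv_eq_of_eq_smul_one_sub hu]
    _ = _ := by rw [smul_add, smul_add, smul_smul, hc_inv]

variable {A : Subalgebra K B} {J : Submodule K B}

theorem IsSemiIdeal.inv_sub_inv_smul_one_mem (hJ : IsSemiIdeal A J) {u : Bˣ} {c : K} {x : B}
    (hc : c ≠ 0) (hu : (u : B) = c • 1 - x) (hx : x ∈ J) (hu_inv : (↑u⁻¹ : B) ∈ A) :
    (↑u⁻¹ : B) - c⁻¹ • 1 ∈ J := by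
  rw [inv_eq_of_eq_smul_one_sub hc hu, add_assoc, add_sub_cancel_left]
  exact J.add_mem (J.smul_mem _ hx) (J.smul_mem _ (hJ.mul_mul_mem hx hu_inv hx))

theorem stmt_11_general (hA : IsSpectrallyInvariant A) (hJ : IsSemiIdeal A J)
    (hproper : J ≠ Subalgebra.toSubmodule A) {x : B} (hx : x ∈ J) {lam mu : K} {u : Bˣ}
    (hu : (u : B) = mu • 1 - (lam • 1 + x)) :
    mu ≠ lam ∧
    (↑u⁻¹ : B) = (mu - lam)⁻¹ • 1 + ((mu - lam) ^ 2)⁻¹ • x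
        + ((mu - lam) ^ 2)⁻¹ • (x * ↑u⁻¹ * x) ∧
    (↑u⁻¹ : B) - (mu - lam)⁻¹ • 1 ∈ J := by
  rw [← sub_sub, ← sub_smul] at hu
  have hu_inv : (↑u⁻¹ : B) ∈ A :=
    hA u (hu ▸ A.sub_mem (A.smul_mem A.one_mem _) (hJ.le hx))
  have hne : mu ≠ lam := by
    rintro rfl
    have hu_mem : (u : B) ∈ J := by simpa [hu] using hx
    exact hproper (hJ.eq_toSubmodule_of_unit_mem hu_mem hu_inv)
  have hc : mu - lam ≠ 0 := sub_ne_zero.mpr hne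
  exact ⟨hne, inv_eq_of_eq_smul_one_sub hc hu, hJ.inv_sub_inv_smul_one_mem hc hu hx hu_inv⟩

end Field

/-- Proposition `prop4.6` (b), resolvent identity: in a unital complex Banach algebra `B`
with a spectrally invariant unital subalgebra `A` and a proper semi-ideal `J ⊊ A`, for
`x ∈ J`, `a = λ•e + x` and `μ` in the resolvent set of `a`, one has `μ ≠ λ`, the identity
`(μe − a)⁻¹ = (μ−λ)⁻¹ e + (μ−λ)⁻² x + (μ−λ)⁻² x (μe−a)⁻¹ x`, and consequently
`(μe − a)⁻¹ − (μ−λ)⁻¹ e ∈ J`. -/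
theorem stmt_11
    (B : Type*) [NormedRing B] [NormedAlgebra ℂ B] [CompleteSpace B]
    (A : Subalgebra ℂ B)
    (hAinv : ∀ a ∈ A, ∀ u : Bˣ, (u : B) = a → ((u⁻¹ : Bˣ) : B) ∈ A)
    (J : Submodule ℂ B) (hJA : (J : Set B) ⊆ (A : Set B))
    (hsemi : ∀ x ∈ J, ∀ b ∈ A, ∀ y ∈ J, x * b * y ∈ J)
    (hproper : (J : Set B) ≠ (A : Set B))
    (x : B) (hx : x ∈ J) (lam mu : ℂ)
    (u : Bˣ) (hu : (u : B) = mu • (1 : B) - (lam • (1 : B) + x)) :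
    mu ≠ lam ∧
    ((u⁻¹ : Bˣ) : B) = (mu - lam)⁻¹ • (1 : B) + ((mu - lam) ^ 2)⁻¹ • x
        + ((mu - lam) ^ 2)⁻¹ • (x * ((u⁻¹ : Bˣ) : B) * x) ∧
    ((u⁻¹ : Bˣ) : B) - (mu - lam)⁻¹ • (1 : B) ∈ J :=
  stmt_11_general (fun u hu ↦ hAinv u hu u rfl) ⟨hJA, fun hx hb hy ↦ hsemi _ hx _ hb _ hy⟩
    (fun h ↦ hproper (congrArg SetLike.coe h)) hx hu
end

section
/- For all f, g ∈ 𝒮(ℝ, A), the integral defining the twisted convolution (f * g)(t) = ∫_ℝ f(s)·α_s(g(t − s)) ds converges absolutely for every t ∈ ℝ, and f * g again belongs to the Schwartz space 𝒮(ℝ, A): it is smooth and sup_{t∈ℝ} |t|^i ‖(f*g)^{(j)}(t)‖ < ∞ for all i, j ∈ ℕ. Hence the twisted convolution makes 𝒮(ℝ, A) into an algebra. -/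
/-!
Twisted convolution by `f` is convolution with the operator-valued kernel `s ↦ f s * α s ·`. By
polynomial growth of `α`, this kernel decays rapidly in operator norm. Convolution with such a
kernel lets all derivatives fall on the second factor and, by Peetre's inequality
`1 + |t| ≤ (1 + |s|) (1 + |t - s|)`, preserves rapid decay. By the group law, the kernel of `f * g`
is the convolution of the kernels of `f` and `g`, so associativity is Fubini's theorem.
-/

open MeasureTheory
open scoped SchwartzMap ContDiff LineDeriv BoundedContinuousFunction

section OperatorKernel

variable {E F G H : Type*} [NormedAddCommGroup E]
  [NormedAddCommGroup F] [NormedSpace ℝ F] [NormedAddCommGroup G] [NormedSpace ℝ G]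
  [NormedAddCommGroup H] [NormedSpace ℝ H]
  [MeasurableSpace E] {μ : Measure E} {T : E → F →L[ℝ] G} {S : E → H →L[ℝ] F}

/-- A jointly continuous family of operators whose operator norm has an integrable majorant.
The majorant is part of the definition because `s ↦ ‖T s‖` need not be continuous. -/
structure IsIntegrableKernel (T : E → F →L[ℝ] G) (μ : Measure E) : Prop where
  continuous_uncurry : Continuous fun p : E × F => T p.1 p.2
  exists_integrable_bound : ∃ w : E → ℝ, Integrable w μ ∧ ∀ s, ‖T s‖ ≤ w s

/-- An operator kernel all of whose moments are integrable kernels. -/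
def IsRapidlyDecreasingKernel (T : E → F →L[ℝ] G) (μ : Measure E) : Prop :=
  ∀ n : ℕ, IsIntegrableKernel (fun s => (1 + ‖s‖) ^ n • T s) μ

/-- The convolution `t ↦ ∫ T s (u (t - s)) ∂μ` of an operator kernel with a vector-valued
function. -/
noncomputable def operatorConvolution (T : E → F →L[ℝ] G) (μ : Measure E) (u : E → F) (t : E) :
    G :=
  ∫ s, T s (u (t - s)) ∂μ

theorem IsRapidlyDecreasingKernel.isIntegrableKernel (hT : IsRapidlyDecreasingKernel T μ) :
    IsIntegrableKernel T μ := by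
  simpa using hT 0

theorem norm_pow_mul_norm_operatorConvolution_le {w : E → ℝ} {i : ℕ} {u : E → F} {c : ℝ}
    (hw : Integrable w μ) (hTw : ∀ s, ‖(1 + ‖s‖) ^ i • T s‖ ≤ w s)
    (hu : ∀ x, (1 + ‖x‖) ^ i * ‖u x‖ ≤ c) (t : E) :
    ‖t‖ ^ i * ‖operatorConvolution T μ u t‖ ≤ (∫ s, w s ∂μ) * c := by
  have peetre (s : E) : ‖t‖ ^ i ≤ (1 + ‖s‖) ^ i * (1 + ‖t - s‖) ^ i := by
    rw [← mul_pow]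
    apply pow_le_pow_left₀ (norm_nonneg t)
    nlinarith [norm_le_norm_add_norm_sub' t s, norm_nonneg s, norm_nonneg (t - s)]
  have pointwise (s : E) : ‖‖t‖ ^ i • T s (u (t - s))‖ ≤ w s * c :=
    calc ‖‖t‖ ^ i • T s (u (t - s))‖ = ‖t‖ ^ i * ‖T s (u (t - s))‖ := by simp [norm_smul]
      _ ≤ (1 + ‖s‖) ^ i * (1 + ‖t - s‖) ^ i * (‖T s‖ * ‖u (t - s)‖) := by
        gcongr
        exacts [peetre s, (T s).le_opNorm _]
      _ = ‖(1 + ‖s‖) ^ i • T s‖ * ((1 + ‖t - s‖) ^ i * ‖u (t - s)‖) := by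
        rw [norm_smul, Real.norm_of_nonneg (by positivity)]
        ring
      _ ≤ w s * c := by
        gcongr
        exacts [(norm_nonneg _).trans (hTw s), hTw s, hu _]
  calc ‖t‖ ^ i * ‖operatorConvolution T μ u t‖
      = ‖∫ s, ‖t‖ ^ i • T s (u (t - s)) ∂μ‖ := by
        simp [operatorConvolution, integral_smul, norm_smul]
    _ ≤ ∫ s, w s * c ∂μ :=
        norm_integral_le_of_norm_le (hw.mul_const c) (ae_of_all _ pointwise)
    _ = (∫ s, w s ∂μ) * c := integral_mul_const c w

variable [BorelSpace E]

namespace IsIntegrableKernel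

variable [SecondCountableTopology E]

theorem integrable (hT : IsIntegrableKernel T μ) (u : E →ᵇ F) (t : E) :
    Integrable (fun s => T s (u (t - s))) μ := by
  obtain ⟨w, hw, hTw⟩ := hT.exists_integrable_bound
  have hcont : Continuous fun s => T s (u (t - s)) :=
    hT.continuous_uncurry.comp (f := fun s => (s, u (t - s))) (by fun_prop)
  exact (hw.mul_const ‖u‖).mono' hcont.aestronglyMeasurable <|
    ae_of_all _ fun s => (T s).le_of_opNorm_le_of_le (hTw s) (u.norm_coe_le_norm _)

theorem integrable_prod [SFinite μ] [μ.IsAddRightInvariant]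
    (hT : IsIntegrableKernel T μ) (hS : IsIntegrableKernel S μ) (u : E →ᵇ H) (t : E) :
    Integrable (fun p : E × E => T p.2 (S (p.1 - p.2) (u (t - p.1)))) (μ.prod μ) := by
  obtain ⟨w, hw, hTw⟩ := hT.exists_integrable_bound
  obtain ⟨w', hw', hSw'⟩ := hS.exists_integrable_bound
  have hScont : Continuous fun p : E × E => S (p.1 - p.2) (u (t - p.1)) :=
    hS.continuous_uncurry.comp (f := fun p : E × E => (p.1 - p.2, u (t - p.1))) (by fun_prop)
  have hcont : Continuous fun p : E × E => T p.2 (S (p.1 - p.2) (u (t - p.1))) :=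
    hT.continuous_uncurry.comp (continuous_snd.prodMk hScont)
  refine ((hw.convolution_integrand (.mul ℝ ℝ) hw').mul_const ‖u‖).mono'
    hcont.aestronglyMeasurable (ae_of_all _ fun p => ?_)
  calc ‖T p.2 (S (p.1 - p.2) (u (t - p.1)))‖ ≤ w p.2 * (w' (p.1 - p.2) * ‖u‖) :=
        (T p.2).le_of_opNorm_le_of_le (hTw _) <|
          (S _).le_of_opNorm_le_of_le (hSw' _) (u.norm_coe_le_norm _)
    _ = w p.2 * w' (p.1 - p.2) * ‖u‖ := (mul_assoc ..).symm

theorem operatorConvolution_operatorConvolution [CompleteSpace F] [CompleteSpace G]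
    [SFinite μ] [μ.IsAddRightInvariant] (hT : IsIntegrableKernel T μ) (hS : IsIntegrableKernel S μ)
    (u : E →ᵇ H) (t : E) :
    operatorConvolution T μ (operatorConvolution S μ u) t =
      ∫ s, ∫ r, T r (S (s - r) (u (t - s))) ∂μ ∂μ :=
  calc operatorConvolution T μ (operatorConvolution S μ u) t
      = ∫ r, ∫ s, T r (S s (u (t - r - s))) ∂μ ∂μ :=
        integral_congr_ae <| ae_of_all _ fun r =>
          ((T r).integral_comp_comm (hS.integrable u (t - r))).symm
    _ = ∫ r, ∫ s, T r (S (s - r) (u (t - s))) ∂μ ∂μ := by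
        congr with r
        rw [← integral_sub_right_eq_self _ r]
        simp only [sub_sub_sub_cancel_right]
    _ = ∫ s, ∫ r, T r (S (s - r) (u (t - s))) ∂μ ∂μ :=
        (integral_integral_swap (hT.integrable_prod hS u t)).symm

end IsIntegrableKernel

variable [NormedSpace ℝ E] [FiniteDimensional ℝ E]

namespace IsIntegrableKernel

theorem integrable_comp (hT : IsIntegrableKernel T μ) (u : E →ᵇ E →L[ℝ] F) (t : E) :
    Integrable (fun s => (T s).comp (u (t - s))) μ := by
  obtain ⟨w, hw, hTw⟩ := hT.exists_integrable_bound
  have hcont : Continuous fun s => (T s).comp (u (t - s)) :=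
    continuous_clm_apply.2 fun v =>
      hT.continuous_uncurry.comp (f := fun s => (s, u (t - s) v)) (by fun_prop)
  exact (hw.mul_const ‖u‖).mono' hcont.aestronglyMeasurable <|
    ae_of_all _ fun s => ((T s).opNorm_comp_le _).trans <|
      mul_le_mul (hTw s) (u.norm_coe_le_norm _) (norm_nonneg _) ((norm_nonneg _).trans (hTw s))

theorem hasFDerivAt_operatorConvolution (hT : IsIntegrableKernel T μ) (g : 𝓢(E, F)) (t : E) :
    HasFDerivAt (operatorConvolution T μ g) (∫ s, (T s).comp (fderiv ℝ g (t - s)) ∂μ) t := by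
  obtain ⟨w, hw, hTw⟩ := hT.exists_integrable_bound
  let g' := (SchwartzMap.fderivCLM ℝ E F g).toBoundedContinuousFunction
  have hg' (x : E) : ‖fderiv ℝ g x‖ ≤ ‖g'‖ := g'.norm_coe_le_norm x
  refine hasFDerivAt_integral_of_dominated_of_fderiv_le
    (F' := fun x s => (T s).comp (fderiv ℝ g (x - s))) (bound := fun s => w s * ‖g'‖)
    Filter.univ_mem
    (.of_forall fun x => (hT.integrable g.toBoundedContinuousFunction x).aestronglyMeasurable)
    (hT.integrable g.toBoundedContinuousFunction t)
    (hT.integrable_comp g' t).aestronglyMeasurable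
    (ae_of_all _ fun s x _ => ?_) (hw.mul_const _) (ae_of_all _ fun s x _ => ?_)
  · exact ((T s).opNorm_comp_le _).trans <|
      mul_le_mul (hTw s) (hg' _) (norm_nonneg _) ((norm_nonneg _).trans (hTw s))
  · exact (T s).hasFDerivAt.comp x ((hasFDerivAt_comp_sub s).2 (g.hasFDerivAt (x - s)))

theorem fderiv_operatorConvolution_apply (hT : IsIntegrableKernel T μ) (g : 𝓢(E, F)) (t v : E) :
    fderiv ℝ (operatorConvolution T μ g) t v = operatorConvolution T μ (∂_{v} g : 𝓢(E, F)) t := by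
  rw [(hT.hasFDerivAt_operatorConvolution g t).fderiv, ContinuousLinearMap.integral_apply]
  · rfl
  · exact hT.integrable_comp (SchwartzMap.fderivCLM ℝ E F g).toBoundedContinuousFunction t

theorem contDiff_operatorConvolution (hT : IsIntegrableKernel T μ) (g : 𝓢(E, F)) :
    ContDiff ℝ ∞ (operatorConvolution T μ g) := by
  refine contDiff_infty.2 fun n => ?_
  induction n generalizing g with
  | zero =>
    have hdiff : Differentiable ℝ (operatorConvolution T μ g) := fun t =>
      (hT.hasFDerivAt_operatorConvolution g t).differentiableAt
    exact contDiff_zero.2 hdiff.continuous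
  | succ n ih =>
    push_cast
    refine contDiff_succ_iff_fderiv_apply.2 ⟨fun t =>
      (hT.hasFDerivAt_operatorConvolution g t).differentiableAt, by simp, fun v => ?_⟩
    simpa only [hT.fderiv_operatorConvolution_apply] using ih (∂_{v} g)

theorem iteratedFDeriv_operatorConvolution_apply (hT : IsIntegrableKernel T μ) (g : 𝓢(E, F))
    {n : ℕ} (t : E) (v : Fin n → E) :
    iteratedFDeriv ℝ n (operatorConvolution T μ g) t v =
      operatorConvolution T μ (∂^{v} g : 𝓢(E, F)) t := by
  induction n generalizing t with
  | zero => rfl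
  | succ n ih =>
    have hdiff : DifferentiableAt ℝ (iteratedFDeriv ℝ n (operatorConvolution T μ g)) t :=
      (hT.contDiff_operatorConvolution g).differentiable_iteratedFDeriv
        (mod_cast ENat.natCast_lt_top n) t
    simp only [hdiff.iteratedFDeriv_succ_apply_left', ih, hT.fderiv_operatorConvolution_apply,
      LineDeriv.iteratedLineDerivOp_succ_left]

end IsIntegrableKernel

namespace IsRapidlyDecreasingKernel

theorem exists_norm_pow_mul_iteratedFDeriv_operatorConvolution_le
    (hT : IsRapidlyDecreasingKernel T μ) (g : 𝓢(E, F)) (i j : ℕ) :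
    ∃ D, ∀ t, ‖t‖ ^ i * ‖iteratedFDeriv ℝ j (operatorConvolution T μ g) t‖ ≤ D := by
  obtain ⟨w, hw, hTw⟩ := (hT i).exists_integrable_bound
  obtain ⟨c, hc⟩ : ∃ c, ∀ x, (1 + ‖x‖) ^ i * ‖iteratedFDeriv ℝ j g x‖ ≤ c :=
    ⟨_, SchwartzMap.one_add_le_sup_seminorm_apply (𝕜 := ℝ) (m := (i, j)) le_rfl le_rfl g⟩
  have hw0 : 0 ≤ ∫ s, w s ∂μ := integral_nonneg fun s => (norm_nonneg _).trans (hTw s)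
  have hc0 : 0 ≤ c := le_trans (by positivity) (hc 0)
  have hlineDeriv (v : Fin j → E) (x : E) :
      (1 + ‖x‖) ^ i * ‖(∂^{v} g : 𝓢(E, F)) x‖ ≤ c * ∏ k, ‖v k‖ := by
    grw [SchwartzMap.iteratedLineDerivOp_eq_iteratedFDeriv, ContinuousMultilinearMap.le_opNorm,
      ← mul_assoc, hc]
  refine ⟨(∫ s, w s ∂μ) * c, fun t => ?_⟩
  suffices h : ‖‖t‖ ^ i • iteratedFDeriv ℝ j (operatorConvolution T μ g) t‖ ≤ (∫ s, w s ∂μ) * c by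
    simpa [norm_smul] using h
  refine ContinuousMultilinearMap.opNorm_le_bound (by positivity) fun v => ?_
  calc ‖(‖t‖ ^ i • iteratedFDeriv ℝ j (operatorConvolution T μ g) t) v‖
      = ‖t‖ ^ i * ‖operatorConvolution T μ (∂^{v} g : 𝓢(E, F)) t‖ := by
        simp [norm_smul, hT.isIntegrableKernel.iteratedFDeriv_operatorConvolution_apply]
    _ ≤ (∫ s, w s ∂μ) * (c * ∏ k, ‖v k‖) :=
        norm_pow_mul_norm_operatorConvolution_le hw hTw (hlineDeriv v) t
    _ = (∫ s, w s ∂μ) * c * ∏ k, ‖v k‖ := (mul_assoc ..).symm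

/-- The convolution of a rapidly decreasing operator kernel with a Schwartz function, as a Schwartz
function. -/
noncomputable def convolution (hT : IsRapidlyDecreasingKernel T μ) (g : 𝓢(E, F)) : 𝓢(E, G) where
  toFun := operatorConvolution T μ g
  smooth' := hT.isIntegrableKernel.contDiff_operatorConvolution g
  decay' := hT.exists_norm_pow_mul_iteratedFDeriv_operatorConvolution_le g

end IsRapidlyDecreasingKernel

end OperatorKernel

section PolynomialGrowth

variable {E F G H K : Type*} [NormedAddCommGroup E]
  [NormedAddCommGroup F] [NormedSpace ℝ F] [NormedAddCommGroup G] [NormedSpace ℝ G]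
  [NormedAddCommGroup H] [NormedSpace ℝ H] [NormedAddCommGroup K] [NormedSpace ℝ K]

/-- A jointly continuous family of operators of at most polynomial growth. -/
structure HasPolynomialGrowth (S : E → F →L[ℝ] G) : Prop where
  continuous_uncurry : Continuous fun p : E × F => S p.1 p.2
  exists_norm_apply_le : ∃ (C : ℝ) (M : ℕ), ∀ s x, ‖S s x‖ ≤ C * (1 + ‖s‖ ^ M) * ‖x‖

theorem HasPolynomialGrowth.exists_opNorm_le {S : E → F →L[ℝ] G} (hS : HasPolynomialGrowth S) :
    ∃ (C : ℝ) (M : ℕ), 0 ≤ C ∧ ∀ s, ‖S s‖ ≤ C * (1 + ‖s‖) ^ M := by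
  obtain ⟨C, M, hC⟩ := hS.exists_norm_apply_le
  refine ⟨|C| * 2, M, by positivity, fun s => (S s).opNorm_le_bound (by positivity) fun x => ?_⟩
  have hone : 1 ≤ (1 + ‖s‖) ^ M := one_le_pow₀ (by simp)
  have hpow : ‖s‖ ^ M ≤ (1 + ‖s‖) ^ M := by gcongr; simp
  calc ‖S s x‖ ≤ C * (1 + ‖s‖ ^ M) * ‖x‖ := hC s x
    _ ≤ |C| * (2 * (1 + ‖s‖) ^ M) * ‖x‖ := by
      gcongr
      exacts [le_abs_self C, by linarith]
    _ = |C| * 2 * (1 + ‖s‖) ^ M * ‖x‖ := by ring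

variable [NormedSpace ℝ E] [MeasurableSpace E] [BorelSpace E] [SecondCountableTopology E]
  {μ : Measure E} [μ.HasTemperateGrowth]

theorem integrable_one_add_norm_pow_mul_norm (f : 𝓢(E, H)) (n : ℕ) :
    Integrable (fun s => (1 + ‖s‖) ^ n * ‖f s‖) μ := by
  have hexpand (s : E) : (1 + ‖s‖) ^ n * ‖f s‖ =
      ∑ k ∈ Finset.range (n + 1), n.choose k * (‖s‖ ^ k * ‖f s‖) := by
    rw [add_comm, add_pow, Finset.sum_mul]
    exact Finset.sum_congr rfl fun k _ => by ring
  simp only [hexpand]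
  exact integrable_finsetSum _ fun k _ => (f.integrable_pow_mul μ k).const_mul _

theorem HasPolynomialGrowth.isRapidlyDecreasingKernel {S : E → F →L[ℝ] G}
    (hS : HasPolynomialGrowth S) (B : H →L[ℝ] G →L[ℝ] K) (f : 𝓢(E, H)) :
    IsRapidlyDecreasingKernel (fun s => (B (f s)).comp (S s)) μ := by
  obtain ⟨C, M, _, hSC⟩ := hS.exists_opNorm_le
  refine fun n => ⟨?_, fun s => ‖B‖ * C * ((1 + ‖s‖) ^ (n + M) * ‖f s‖),
    (integrable_one_add_norm_pow_mul_norm f _).const_mul _, fun s => ?_⟩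
  · have := hS.continuous_uncurry
    have := f.continuous
    simp only [smul_apply, ContinuousLinearMap.comp_apply]
    fun_prop
  · calc ‖(1 + ‖s‖) ^ n • (B (f s)).comp (S s)‖
        = (1 + ‖s‖) ^ n * ‖(B (f s)).comp (S s)‖ := by
          rw [norm_smul, Real.norm_of_nonneg (by positivity)]
      _ ≤ (1 + ‖s‖) ^ n * (‖B‖ * ‖f s‖ * (C * (1 + ‖s‖) ^ M)) := by
          grw [ContinuousLinearMap.opNorm_comp_le, B.le_opNorm, hSC]
      _ = ‖B‖ * C * ((1 + ‖s‖) ^ (n + M) * ‖f s‖) := by ring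

end PolynomialGrowth

section TwistedConvolution

variable {E A : Type*} [NonUnitalNormedRing A] [NormedSpace ℝ A]
  [IsScalarTower ℝ A A] [SMulCommClass ℝ A A] {α : E → A →L[ℝ] A}

/-- The operators `x ↦ f s * α s x`, whose convolution with `g` is the twisted convolution of `f`
and `g`. -/
noncomputable def twistedKernel (α : E → A →L[ℝ] A) (f : E → A) (s : E) : A →L[ℝ] A :=
  (ContinuousLinearMap.mul ℝ A (f s)).comp (α s)

theorem twistedKernel_apply (f : E → A) (s : E) (x : A) :
    twistedKernel α f s x = f s * α s x :=
  rfl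

theorem twistedKernel_twistedKernel_sub [AddCommGroup E]
    (hmul : ∀ s a b, α s (a * b) = α s a * α s b)
    (hadd : ∀ s t a, α (s + t) a = α s (α t a)) (f g : E → A) (r s : E) (x : A) :
    twistedKernel α f r (twistedKernel α g (s - r) x) =
      twistedKernel α f r (g (s - r)) * α s x := by
  simp only [twistedKernel_apply, hmul, ← hadd, add_sub_cancel, mul_assoc]

variable [NormedAddCommGroup E] [NormedSpace ℝ E] [FiniteDimensional ℝ E] [MeasurableSpace E]
  [BorelSpace E] {μ : Measure E}

section

variable [μ.HasTemperateGrowth]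

theorem HasPolynomialGrowth.isRapidlyDecreasingKernel_twistedKernel (hα : HasPolynomialGrowth α)
    (f : 𝓢(E, A)) : IsRapidlyDecreasingKernel (twistedKernel α f) μ :=
  hα.isRapidlyDecreasingKernel (ContinuousLinearMap.mul ℝ A) f

theorem HasPolynomialGrowth.integrable_twistedKernel (hα : HasPolynomialGrowth α)
    (f g : 𝓢(E, A)) (t : E) : Integrable (fun s => twistedKernel α f s (g (t - s))) μ :=
  (hα.isRapidlyDecreasingKernel_twistedKernel f).isIntegrableKernel.integrable
    g.toBoundedContinuousFunction t

/-- The twisted convolution `t ↦ ∫ f s * α s (g (t - s)) ∂μ` of Schwartz functions, as a Schwartz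
function. -/
noncomputable def twistedConvolution (hα : HasPolynomialGrowth α) (μ : Measure E)
    [μ.HasTemperateGrowth] (f g : 𝓢(E, A)) : 𝓢(E, A) :=
  (hα.isRapidlyDecreasingKernel_twistedKernel (μ := μ) f).convolution g

theorem twistedConvolution_apply (hα : HasPolynomialGrowth α) (f g : 𝓢(E, A)) (t : E) :
    twistedConvolution hα μ f g t = ∫ s, f s * α s (g (t - s)) ∂μ :=
  rfl

end

variable [μ.IsAddHaarMeasure]

theorem twistedKernel_twistedConvolution_apply (hα : HasPolynomialGrowth α)
    (hmul : ∀ s a b, α s (a * b) = α s a * α s b)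
    (hadd : ∀ s t a, α (s + t) a = α s (α t a)) (f g : 𝓢(E, A)) (s : E) (x : A) :
    twistedKernel α (twistedConvolution hα μ f g) s x =
      ∫ r, twistedKernel α f r (twistedKernel α g (s - r) x) ∂μ := by
  simp only [twistedKernel_twistedKernel_sub hmul hadd]
  exact (integral_mul_const_of_integrable (hα.integrable_twistedKernel f g s)).symm

theorem twistedConvolution_assoc [CompleteSpace A] (hα : HasPolynomialGrowth α)
    (hmul : ∀ s a b, α s (a * b) = α s a * α s b)
    (hadd : ∀ s t a, α (s + t) a = α s (α t a)) (f g h : 𝓢(E, A)) :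
    twistedConvolution hα μ (twistedConvolution hα μ f g) h =
      twistedConvolution hα μ f (twistedConvolution hα μ g h) := by
  have isIntegrableKernel (k : 𝓢(E, A)) : IsIntegrableKernel (twistedKernel α k) μ :=
    (hα.isRapidlyDecreasingKernel_twistedKernel k).isIntegrableKernel
  ext t
  calc twistedConvolution hα μ (twistedConvolution hα μ f g) h t
      = ∫ s, ∫ r, twistedKernel α f r (twistedKernel α g (s - r) (h (t - s))) ∂μ ∂μ := by
        simp only [← twistedKernel_twistedConvolution_apply hα hmul hadd]
        rfl
    _ = twistedConvolution hα μ f (twistedConvolution hα μ g h) t :=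
        ((isIntegrableKernel f).operatorConvolution_operatorConvolution (isIntegrableKernel g)
          h.toBoundedContinuousFunction t).symm

end TwistedConvolution

theorem stmt_16_general {E A : Type*} [NormedAddCommGroup E] [NormedSpace ℝ E]
    [FiniteDimensional ℝ E] [MeasurableSpace E] [BorelSpace E] (μ : Measure E)
    [μ.IsAddHaarMeasure] [NonUnitalNormedRing A] [NormedSpace ℝ A] [IsScalarTower ℝ A A]
    [SMulCommClass ℝ A A] [CompleteSpace A] (α : E → A →L[ℝ] A)
    (hmul : ∀ s a b, α s (a * b) = α s a * α s b)
    (hadd : ∀ s t a, α (s + t) a = α s (α t a)) (hα : HasPolynomialGrowth α) :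
    (∀ f g : 𝓢(E, A), ∀ t, Integrable (fun s => f s * α s (g (t - s))) μ) ∧
    ∃ conv : 𝓢(E, A) → 𝓢(E, A) → 𝓢(E, A),
      (∀ f g t, conv f g t = ∫ s, f s * α s (g (t - s)) ∂μ) ∧
      ∀ f g h, conv (conv f g) h = conv f (conv g h) :=
  ⟨hα.integrable_twistedKernel, twistedConvolution hα μ, twistedConvolution_apply hα,
    twistedConvolution_assoc hα hmul hadd⟩

open MeasureTheory in
/-- For a one-parameter automorphism group `α` with polynomial growth of a Banach algebra
`A`, the twisted convolution `(f*g)(t) = ∫ f(s) α_s(g(t-s)) ds` of Schwartz functions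
converges absolutely for every `t`, again belongs to `𝒮(ℝ, A)` (it is smooth and all
`sup_t |t|^i ‖(f*g)^{(j)}(t)‖` are finite), and the twisted convolution is associative, so
that it makes `𝒮(ℝ, A)` into an algebra. -/
theorem stmt_16
    (A : Type*) [NormedRing A] [NormedAlgebra ℂ A] [CompleteSpace A]
    (α : ℝ → A ≃ₐ[ℂ] A)
    (hgrp : ∀ t s : ℝ, ∀ a : A, α (t + s) a = α t (α s a))
    (h0 : ∀ a : A, α 0 a = a)
    (hcont : Continuous fun p : ℝ × A => α p.1 p.2)
    (C : ℝ) (hC : 0 < C) (M : ℕ)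
    (hpoly : ∀ (t : ℝ) (a : A), ‖α t a‖ ≤ C * (1 + |t| ^ M) * ‖a‖) :
    -- absolute convergence
    (∀ f g : SchwartzMap ℝ A, ∀ t : ℝ,
        Integrable (fun s : ℝ => f s * α s (g (t - s)))) ∧
    -- `f * g` is again a Schwartz function
    (∀ f g : SchwartzMap ℝ A,
        ContDiff ℝ (⊤ : ℕ∞) (fun t : ℝ => ∫ s : ℝ, f s * α s (g (t - s))) ∧
        ∀ i j : ℕ, ∃ D : ℝ, ∀ t : ℝ,
          |t| ^ i * ‖iteratedDeriv j
              (fun t : ℝ => ∫ s : ℝ, f s * α s (g (t - s))) t‖ ≤ D) ∧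
    -- the twisted convolution is associative, making `𝒮(ℝ, A)` an algebra
    (∀ f g h : SchwartzMap ℝ A, ∀ t : ℝ,
        (∫ s : ℝ, (∫ r : ℝ, f r * α r (g (s - r))) * α s (h (t - s)))
          = ∫ s : ℝ, f s * α s ((∫ r : ℝ, g r * α r (h (t - s - r))))) := by
  let β (t : ℝ) : A →L[ℝ] A :=
    ⟨(α t).toLinearMap.restrictScalars ℝ, hcont.comp (Continuous.prodMk_right t)⟩
  have hβ : HasPolynomialGrowth β := ⟨hcont, C, M, hpoly⟩
  obtain ⟨hint, conv, hconv, hassoc⟩ :=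
    stmt_16_general volume β (fun t => map_mul (α t)) hgrp hβ
  have hfun (f g : SchwartzMap ℝ A) : (fun t => ∫ s, f s * α s (g (t - s))) = conv f g :=
    funext fun t => (hconv f g t).symm
  refine ⟨hint, fun f g => ⟨?_, fun i j => ?_⟩, fun f g h t => ?_⟩
  · exact hfun f g ▸ (conv f g).smooth ⊤
  · exact hfun f g ▸ ⟨_, (conv f g).le_seminorm' ℝ i j⟩
  · have hassoc_apply := DFunLike.congr_fun (hassoc f g h) t
    simp only [hconv] at hassoc_apply
    exact hassoc_apply
end
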